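/- Let (H,α) be a monoidal Hom-Hopf algebra with bijective antipode S, (A,β) a right (H,α)-Hom-comodule algebra, and suppose λ_A: A⊗H→A is a right (H,α)-colinear retraction of ρ_A (i.e. λ_A∘ρ_A = id_A, λ_A∘(β⊗α)=β∘λ_A, and λ_A is colinear for the coaction (a⊗h)↦(β⁻¹(a)⊗h₁)⊗α(h₂) on A⊗H). Let (N,ν) be a right (H,A)-Hom-Hopf module. Then the linear map f: N⊗(A⊗H)→N defined by f(n⊗(a⊗h)) = ν(n₍₀₎)·λ_A(a ⊗ S(α⁻¹(n₍₁₎))α⁻¹(h)) is surjective (indeed f(n₍₀₎⊗(1_A⊗α⁻¹(n₍₁₎)))=n for all n∈N) and is right (H,α)-colinear, where N⊗(A⊗H) carries the coaction n⊗(a⊗h) ↦ (ν⁻¹(n)⊗(β⁻¹(a)⊗h₁))⊗α²(h₂). -/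

import Mathlib

open TensorProduct

noncomputable section

/-- A (unital) monoidal Hom-bialgebra, following Caenepeel–Goyvaerts.
The algebra axioms are stated pointwise, the coalgebra axioms at the level of
linear maps (using the standard vector-space associator to compare the two
sides of Hom-coassociativity). -/
structure MonoidalHomBialgebra (k : Type) [Field k] (H : Type) [AddCommGroup H] [Module k H] where
  mul : H →ₗ[k] H →ₗ[k] H
  one : H
  comul : H →ₗ[k] H ⊗[k] H
  counit : H →ₗ[k] k
  aut : H ≃ₗ[k] H
  hom_assoc : ∀ a b c, mul (aut a) (mul b c) = mul (mul a b) (aut c)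
  mulOne : ∀ a, mul a one = aut a
  oneMul : ∀ a, mul one a = aut a
  aut_mul : ∀ a b, aut (mul a b) = mul (aut a) (aut b)
  aut_one : aut one = one
  coassoc :
    (TensorProduct.assoc k H H H).toLinearMap ∘ₗ
        (TensorProduct.map comul aut.symm.toLinearMap) ∘ₗ comul =
      (TensorProduct.map aut.symm.toLinearMap comul) ∘ₗ comul
  counit_left :
    (TensorProduct.lid k H).toLinearMap ∘ₗ (TensorProduct.map counit LinearMap.id) ∘ₗ comul =
      aut.symm.toLinearMap
  counit_right :
    (TensorProduct.rid k H).toLinearMap ∘ₗ (TensorProduct.map LinearMap.id counit) ∘ₗ comul =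
      aut.symm.toLinearMap
  comul_aut :
    comul ∘ₗ aut.toLinearMap = (TensorProduct.map aut.toLinearMap aut.toLinearMap) ∘ₗ comul
  counit_aut : counit ∘ₗ aut.toLinearMap = counit
  comul_mul :
    comul ∘ₗ TensorProduct.lift mul =
      (TensorProduct.map (TensorProduct.lift mul) (TensorProduct.lift mul)) ∘ₗ
        (TensorProduct.tensorTensorTensorComm k H H H H).toLinearMap ∘ₗ
          (TensorProduct.map comul comul)
  comul_one : comul one = one ⊗ₜ[k] one
  counit_mul : ∀ a b, counit (mul a b) = counit a * counit b
  counit_one : counit one = 1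

/-- A monoidal Hom-Hopf algebra: a monoidal Hom-bialgebra with an antipode. -/
structure MonoidalHomHopf (k : Type) [Field k] (H : Type) [AddCommGroup H] [Module k H]
    extends MonoidalHomBialgebra k H where
  antipode : H →ₗ[k] H
  antipode_aut : antipode ∘ₗ aut.toLinearMap = aut.toLinearMap ∘ₗ antipode
  antipode_mul_left :
    TensorProduct.lift mul ∘ₗ (TensorProduct.map antipode LinearMap.id) ∘ₗ comul =
      LinearMap.toSpanSingleton k H one ∘ₗ counit
  antipode_mul_right :
    TensorProduct.lift mul ∘ₗ (TensorProduct.map LinearMap.id antipode) ∘ₗ comul =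
      LinearMap.toSpanSingleton k H one ∘ₗ counit

variable {k : Type} [Field k] {H : Type} [AddCommGroup H] [Module k H]

/-- A right (H,α)-Hom-comodule. -/
structure HomComodule (Hb : MonoidalHomBialgebra k H) (M : Type) [AddCommGroup M] [Module k M] where
  coact : M →ₗ[k] M ⊗[k] H
  aut : M ≃ₗ[k] M
  coassoc :
    (TensorProduct.map aut.symm.toLinearMap Hb.comul) ∘ₗ coact =
      (TensorProduct.assoc k M H H).toLinearMap ∘ₗ
        (TensorProduct.map coact Hb.aut.symm.toLinearMap) ∘ₗ coact
  counit :
    (TensorProduct.rid k M).toLinearMap ∘ₗ (TensorProduct.map LinearMap.id Hb.counit) ∘ₗ coact =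
      aut.symm.toLinearMap
  coact_aut :
    coact ∘ₗ aut.toLinearMap = (TensorProduct.map aut.toLinearMap Hb.aut.toLinearMap) ∘ₗ coact

/-- A left (H,α)-Hom-comodule. -/
structure HomLeftComodule (Hb : MonoidalHomBialgebra k H) (M : Type) [AddCommGroup M] [Module k M] where
  coact : M →ₗ[k] H ⊗[k] M
  aut : M ≃ₗ[k] M
  coassoc :
    (TensorProduct.map Hb.comul aut.symm.toLinearMap) ∘ₗ coact =
      (TensorProduct.assoc k H H M).symm.toLinearMap ∘ₗ
        (TensorProduct.map Hb.aut.symm.toLinearMap coact) ∘ₗ coact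
  counit :
    (TensorProduct.lid k M).toLinearMap ∘ₗ (TensorProduct.map Hb.counit LinearMap.id) ∘ₗ coact =
      aut.symm.toLinearMap
  coact_aut :
    coact ∘ₗ aut.toLinearMap = (TensorProduct.map Hb.aut.toLinearMap aut.toLinearMap) ∘ₗ coact

/-- A right (H,α)-Hom-comodule algebra. -/
structure HomComoduleAlgebra (Hb : MonoidalHomBialgebra k H) (A : Type) [AddCommGroup A] [Module k A] where
  mul : A →ₗ[k] A →ₗ[k] A
  one : A
  aut : A ≃ₗ[k] A
  hom_assoc : ∀ a b c, mul (aut a) (mul b c) = mul (mul a b) (aut c)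
  mulOne : ∀ a, mul a one = aut a
  oneMul : ∀ a, mul one a = aut a
  aut_mul : ∀ a b, aut (mul a b) = mul (aut a) (aut b)
  aut_one : aut one = one
  coact : A →ₗ[k] A ⊗[k] H
  coassoc :
    (TensorProduct.map aut.symm.toLinearMap Hb.comul) ∘ₗ coact =
      (TensorProduct.assoc k A H H).toLinearMap ∘ₗ
        (TensorProduct.map coact Hb.aut.symm.toLinearMap) ∘ₗ coact
  counit :
    (TensorProduct.rid k A).toLinearMap ∘ₗ (TensorProduct.map LinearMap.id Hb.counit) ∘ₗ coact =
      aut.symm.toLinearMap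
  coact_aut :
    coact ∘ₗ aut.toLinearMap = (TensorProduct.map aut.toLinearMap Hb.aut.toLinearMap) ∘ₗ coact
  coact_mul :
    coact ∘ₗ TensorProduct.lift mul =
      (TensorProduct.map (TensorProduct.lift mul) (TensorProduct.lift Hb.mul)) ∘ₗ
        (TensorProduct.tensorTensorTensorComm k A H A H).toLinearMap ∘ₗ
          (TensorProduct.map coact coact)
  coact_one : coact one = one ⊗ₜ[k] Hb.one

variable {A : Type} [AddCommGroup A] [Module k A]

/-- A right (A,β)-Hom-module. -/
structure HomModule {Hb : MonoidalHomBialgebra k H} (Ac : HomComoduleAlgebra Hb A)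
    (M : Type) [AddCommGroup M] [Module k M] where
  act : M →ₗ[k] A →ₗ[k] M
  aut : M ≃ₗ[k] M
  act_act : ∀ m a b, act (act m a) (Ac.aut b) = act (aut m) (Ac.mul a b)
  act_one : ∀ m, act m Ac.one = aut m
  aut_act : ∀ m a, aut (act m a) = act (aut m) (Ac.aut a)

/-- A right Hom-module over the subalgebra of `A` carved out by `Bset`
(typically the coinvariants `B = A^{co H}`): the action is a bilinear map
`M × A → M` whose Hom-module axioms are only required on `Bset`. -/
structure HomModuleOn {Hb : MonoidalHomBialgebra k H} (Ac : HomComoduleAlgebra Hb A)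
    (Bset : Set A) (M : Type) [AddCommGroup M] [Module k M] where
  act : M →ₗ[k] A →ₗ[k] M
  aut : M ≃ₗ[k] M
  act_act : ∀ m, ∀ b ∈ Bset, ∀ b' ∈ Bset, act (act m b) (Ac.aut b') = act (aut m) (Ac.mul b b')
  act_one : ∀ m, act m Ac.one = aut m
  aut_act : ∀ m, ∀ b ∈ Bset, aut (act m b) = act (aut m) (Ac.aut b)

/-- A left Hom-module over the subalgebra of `A` carved out by `Bset`. -/
structure HomLeftModuleOn {Hb : MonoidalHomBialgebra k H} (Ac : HomComoduleAlgebra Hb A)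
    (Bset : Set A) (M : Type) [AddCommGroup M] [Module k M] where
  act : A →ₗ[k] M →ₗ[k] M
  aut : M ≃ₗ[k] M
  act_act : ∀ m, ∀ b ∈ Bset, ∀ b' ∈ Bset, act (Ac.aut b) (act b' m) = act (Ac.mul b b') (aut m)
  act_one : ∀ m, act Ac.one m = aut m
  aut_act : ∀ m, ∀ b ∈ Bset, aut (act b m) = act (Ac.aut b) (aut m)

/-- A right-right (H,A)-Hom-Hopf module (a relative Hom-Hopf module). -/
structure HomHopfModule {Hb : MonoidalHomBialgebra k H} (Ac : HomComoduleAlgebra Hb A)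
    (N : Type) [AddCommGroup N] [Module k N] where
  act : N →ₗ[k] A →ₗ[k] N
  aut : N ≃ₗ[k] N
  act_act : ∀ n a b, act (act n a) (Ac.aut b) = act (aut n) (Ac.mul a b)
  act_one : ∀ n, act n Ac.one = aut n
  aut_act : ∀ n a, aut (act n a) = act (aut n) (Ac.aut a)
  coact : N →ₗ[k] N ⊗[k] H
  coassoc :
    (TensorProduct.map aut.symm.toLinearMap Hb.comul) ∘ₗ coact =
      (TensorProduct.assoc k N H H).toLinearMap ∘ₗ
        (TensorProduct.map coact Hb.aut.symm.toLinearMap) ∘ₗ coact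
  counit :
    (TensorProduct.rid k N).toLinearMap ∘ₗ (TensorProduct.map LinearMap.id Hb.counit) ∘ₗ coact =
      aut.symm.toLinearMap
  coact_aut :
    coact ∘ₗ aut.toLinearMap = (TensorProduct.map aut.toLinearMap Hb.aut.toLinearMap) ∘ₗ coact
  compat :
    coact ∘ₗ TensorProduct.lift act =
      (TensorProduct.map (TensorProduct.lift act) (TensorProduct.lift Hb.mul)) ∘ₗ
        (TensorProduct.tensorTensorTensorComm k N H A H).toLinearMap ∘ₗ
          (TensorProduct.map coact Ac.coact)

/-- A left-right (H,A)-Hom-Hopf module. -/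
structure LRHomHopfModule {Hb : MonoidalHomBialgebra k H} (Ac : HomComoduleAlgebra Hb A)
    (N : Type) [AddCommGroup N] [Module k N] where
  act : A →ₗ[k] N →ₗ[k] N
  aut : N ≃ₗ[k] N
  act_act : ∀ n a b, act (Ac.aut a) (act b n) = act (Ac.mul a b) (aut n)
  act_one : ∀ n, act Ac.one n = aut n
  aut_act : ∀ n a, aut (act a n) = act (Ac.aut a) (aut n)
  coact : N →ₗ[k] N ⊗[k] H
  coassoc :
    (TensorProduct.map aut.symm.toLinearMap Hb.comul) ∘ₗ coact =
      (TensorProduct.assoc k N H H).toLinearMap ∘ₗ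
        (TensorProduct.map coact Hb.aut.symm.toLinearMap) ∘ₗ coact
  counit :
    (TensorProduct.rid k N).toLinearMap ∘ₗ (TensorProduct.map LinearMap.id Hb.counit) ∘ₗ coact =
      aut.symm.toLinearMap
  coact_aut :
    coact ∘ₗ aut.toLinearMap = (TensorProduct.map aut.toLinearMap Hb.aut.toLinearMap) ∘ₗ coact
  compat :
    coact ∘ₗ TensorProduct.lift act =
      (TensorProduct.map (TensorProduct.lift act) (TensorProduct.lift Hb.mul)) ∘ₗ
        (TensorProduct.tensorTensorTensorComm k A H N H).toLinearMap ∘ₗ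
          (TensorProduct.map Ac.coact coact)

/-- Coinvariants (as a set) of a coaction `coact` with structure automorphism `autM`. -/
def coinvSetOf {M : Type} [AddCommGroup M] [Module k M] (oneH : H)
    (coact : M →ₗ[k] M ⊗[k] H) (autM : M ≃ₗ[k] M) : Set M :=
  {m | coact m = autM.symm m ⊗ₜ[k] oneH}

/-- Coinvariants as a submodule. -/
def coinvSubmoduleOf {M : Type} [AddCommGroup M] [Module k M] (oneH : H)
    (coact : M →ₗ[k] M ⊗[k] H) (autM : M ≃ₗ[k] M) : Submodule k M :=
  LinearMap.ker (coact - ((TensorProduct.mk k M H).flip oneH) ∘ₗ autM.symm.toLinearMap)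

/-- The coinvariants `B = A^{co H}` of a Hom-comodule algebra. -/
def coinvA {Hb : MonoidalHomBialgebra k H} (Ac : HomComoduleAlgebra Hb A) : Set A :=
  coinvSetOf Hb.one Ac.coact Ac.aut

/-- The defining relations of the tensor product `M ⊗_B A` for a right `B`-Hom-module `M`. -/
def relSubR {M : Type} [AddCommGroup M] [Module k M]
    (mulA : A →ₗ[k] A →ₗ[k] A) (autA : A ≃ₗ[k] A) (Bset : Set A)
    (act : M →ₗ[k] A →ₗ[k] M) (autM : M ≃ₗ[k] M) : Submodule k (M ⊗[k] A) :=
  Submodule.span k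
    {x | ∃ m a b, b ∈ Bset ∧ x = act m b ⊗ₜ[k] autA a - autM m ⊗ₜ[k] mulA b a}

/-- The defining relations of the tensor product `A ⊗_B M` for a left `B`-Hom-module `M`. -/
def relSubL {M : Type} [AddCommGroup M] [Module k M]
    (mulA : A →ₗ[k] A →ₗ[k] A) (autA : A ≃ₗ[k] A) (Bset : Set A)
    (act : A →ₗ[k] M →ₗ[k] M) (autM : M ≃ₗ[k] M) : Submodule k (A ⊗[k] M) :=
  Submodule.span k
    {x | ∃ a m b, b ∈ Bset ∧ x = autA a ⊗ₜ[k] act b m - mulA a b ⊗ₜ[k] autM m}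

/-- The cotensor product `X □_H V` of a right Hom-comodule and a left Hom-comodule,
as a submodule of `X ⊗ V`. -/
def cotensorSub {X V : Type} [AddCommGroup X] [Module k X] [AddCommGroup V] [Module k V]
    (coactX : X →ₗ[k] X ⊗[k] H) (autX : X ≃ₗ[k] X)
    (coactV : V →ₗ[k] H ⊗[k] V) (autV : V ≃ₗ[k] V) : Submodule k (X ⊗[k] V) :=
  LinearMap.ker
    ((TensorProduct.map coactX autV.symm.toLinearMap) -
      ((TensorProduct.assoc k X H V).symm.toLinearMap ∘ₗ
        TensorProduct.map autX.symm.toLinearMap coactV))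

/-- The canonical Galois map at the level of `A ⊗ A`:
`a ⊗ b ↦ β⁻¹(a)·b₍₀₎ ⊗ α(b₍₁₎)`. -/
def canPreLin {Hb : MonoidalHomBialgebra k H} (Ac : HomComoduleAlgebra Hb A) :
    A ⊗[k] A →ₗ[k] A ⊗[k] H :=
  (TensorProduct.map (TensorProduct.lift Ac.mul) Hb.aut.toLinearMap) ∘ₗ
    (TensorProduct.assoc k A A H).symm.toLinearMap ∘ₗ
      (TensorProduct.map Ac.aut.symm.toLinearMap Ac.coact)

/-- The second canonical Galois map at the level of `A ⊗ A`:
`a ⊗ b ↦ a₍₀₎·β⁻¹(b) ⊗ α(a₍₁₎)`. -/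
def canPreLin' {Hb : MonoidalHomBialgebra k H} (Ac : HomComoduleAlgebra Hb A) :
    A ⊗[k] A →ₗ[k] A ⊗[k] H :=
  (TensorProduct.map (TensorProduct.lift Ac.mul) Hb.aut.toLinearMap) ∘ₗ
    (TensorProduct.assoc k A A H).symm.toLinearMap ∘ₗ
      (TensorProduct.map LinearMap.id (TensorProduct.comm k H A).toLinearMap) ∘ₗ
        (TensorProduct.assoc k A H A).toLinearMap ∘ₗ
          (TensorProduct.map Ac.coact Ac.aut.symm.toLinearMap)

/-- `φ : H → A` is a total integral. -/
def IsTotalIntegral {Hb : MonoidalHomBialgebra k H} (Ac : HomComoduleAlgebra Hb A)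
    (φ : H →ₗ[k] A) : Prop :=
  φ ∘ₗ Hb.aut.toLinearMap = Ac.aut.toLinearMap ∘ₗ φ ∧
    Ac.coact ∘ₗ φ = (TensorProduct.map φ LinearMap.id) ∘ₗ Hb.comul ∧
      φ Hb.one = Ac.one

/-- The Hom-comodule structure on `M ⊗ A` inducing that of `M ⊗_B A`:
`m ⊗ a ↦ (μ⁻¹(m) ⊗ a₍₀₎) ⊗ α(a₍₁₎)`. -/
def quotCoactPreR {Hb : MonoidalHomBialgebra k H} (Ac : HomComoduleAlgebra Hb A)
    {M : Type} [AddCommGroup M] [Module k M] (autM : M ≃ₗ[k] M) :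
    (M ⊗[k] A) →ₗ[k] (M ⊗[k] A) ⊗[k] H :=
  (TensorProduct.assoc k M A H).symm.toLinearMap ∘ₗ
    TensorProduct.map autM.symm.toLinearMap
      ((TensorProduct.map LinearMap.id Hb.aut.toLinearMap) ∘ₗ Ac.coact)

/-- The Hom-comodule structure on `A ⊗ M` inducing that of `A ⊗_B M`:
`a ⊗ m ↦ (a₍₀₎ ⊗ μ⁻¹(m)) ⊗ α(a₍₁₎)`. -/
def quotCoactPreL {Hb : MonoidalHomBialgebra k H} (Ac : HomComoduleAlgebra Hb A)
    {M : Type} [AddCommGroup M] [Module k M] (autM : M ≃ₗ[k] M) :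
    (A ⊗[k] M) →ₗ[k] (A ⊗[k] M) ⊗[k] H :=
  (TensorProduct.assoc k A M H).symm.toLinearMap ∘ₗ
    (TensorProduct.map LinearMap.id (TensorProduct.comm k H M).toLinearMap) ∘ₗ
      (TensorProduct.assoc k A H M).toLinearMap ∘ₗ
        TensorProduct.map
          ((TensorProduct.map LinearMap.id Hb.aut.toLinearMap) ∘ₗ Ac.coact)
          autM.symm.toLinearMap

/-- Bijectivity of the adjunction unit `η_M : M → (M ⊗_B A)^{co H}`, `m ↦ μ⁻¹(m) ⊗ 1_A`,
for a right `B`-Hom-module `M`.  Since the Hom-comodule structure of `M ⊗_B A` is the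
one induced from `M ⊗ A`, it is quantified over all maps `ρbar` (resp. `θ`) induced by
the comodule structure (resp. by `μ⁻¹ ⊗ β⁻¹`) on `M ⊗ A`. -/
def UnitBijectiveR {Hb : MonoidalHomBialgebra k H} (Ac : HomComoduleAlgebra Hb A)
    (Bset : Set A) {M : Type} [AddCommGroup M] [Module k M]
    (S : HomModuleOn Ac Bset M) : Prop :=
  ∀ (ρbar : ((M ⊗[k] A) ⧸ relSubR Ac.mul Ac.aut Bset S.act S.aut) →ₗ[k]
      ((M ⊗[k] A) ⧸ relSubR Ac.mul Ac.aut Bset S.act S.aut) ⊗[k] H)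
    (θ : ((M ⊗[k] A) ⧸ relSubR Ac.mul Ac.aut Bset S.act S.aut) →ₗ[k]
      ((M ⊗[k] A) ⧸ relSubR Ac.mul Ac.aut Bset S.act S.aut)),
    ρbar ∘ₗ (relSubR Ac.mul Ac.aut Bset S.act S.aut).mkQ =
      (TensorProduct.map (relSubR Ac.mul Ac.aut Bset S.act S.aut).mkQ LinearMap.id) ∘ₗ
        quotCoactPreR Ac S.aut →
    θ ∘ₗ (relSubR Ac.mul Ac.aut Bset S.act S.aut).mkQ =
      (relSubR Ac.mul Ac.aut Bset S.act S.aut).mkQ ∘ₗ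
        TensorProduct.map S.aut.symm.toLinearMap Ac.aut.symm.toLinearMap →
    ((∀ m : M, ρbar ((relSubR Ac.mul Ac.aut Bset S.act S.aut).mkQ (S.aut.symm m ⊗ₜ[k] Ac.one)) =
        θ ((relSubR Ac.mul Ac.aut Bset S.act S.aut).mkQ (S.aut.symm m ⊗ₜ[k] Ac.one)) ⊗ₜ[k] Hb.one) ∧
      Function.Injective
        (fun m : M => (relSubR Ac.mul Ac.aut Bset S.act S.aut).mkQ (S.aut.symm m ⊗ₜ[k] Ac.one)) ∧
      ∀ x, ρbar x = θ x ⊗ₜ[k] Hb.one →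
        ∃ m : M, (relSubR Ac.mul Ac.aut Bset S.act S.aut).mkQ (S.aut.symm m ⊗ₜ[k] Ac.one) = x)

/-- The relations of `N^{co H} ⊗_B A` for a right (H,A)-Hom-Hopf module `N`;
the closure of the coinvariants under the `B`-action and the automorphism is
encoded by existential membership. -/
def relCoinvR {Hb : MonoidalHomBialgebra k H} (Ac : HomComoduleAlgebra Hb A)
    (Bset : Set A) {N : Type} [AddCommGroup N] [Module k N]
    (P : HomHopfModule Ac N) :
    Submodule k ((coinvSubmoduleOf Hb.one P.coact P.aut : Submodule k N) ⊗[k] A) :=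
  Submodule.span k
    {x | ∃ (n n' n'' : coinvSubmoduleOf Hb.one P.coact P.aut) (a b : A), b ∈ Bset ∧
      (n' : N) = P.act n b ∧ (n'' : N) = P.aut n ∧
      x = n' ⊗ₜ[k] Ac.aut a - n'' ⊗ₜ[k] Ac.mul b a}

/-- The counit of the adjunction at the level of `N^{co H} ⊗ A`: `n ⊗ a ↦ n · a`. -/
def counitPre {Hb : MonoidalHomBialgebra k H} (Ac : HomComoduleAlgebra Hb A)
    {N : Type} [AddCommGroup N] [Module k N] (P : HomHopfModule Ac N) :
    ((coinvSubmoduleOf Hb.one P.coact P.aut : Submodule k N) ⊗[k] A) →ₗ[k] N :=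
  TensorProduct.lift (P.act ∘ₗ (coinvSubmoduleOf Hb.one P.coact P.aut).subtype)

/-- Bijectivity of the adjunction counit `ε_N : N^{co H} ⊗_B A → N`, `n ⊗ a ↦ n·a`:
equivalently, the lift `N^{co H} ⊗ A → N` is surjective and its kernel is exactly
the defining relations of `⊗_B`. -/
def CounitBijectiveR {Hb : MonoidalHomBialgebra k H} (Ac : HomComoduleAlgebra Hb A)
    (Bset : Set A) {N : Type} [AddCommGroup N] [Module k N]
    (P : HomHopfModule Ac N) : Prop :=
  Function.Surjective (counitPre Ac P) ∧ LinearMap.ker (counitPre Ac P) = relCoinvR Ac Bset P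

/-- Bijectivity of the adjunction unit `η'_M : M → (A ⊗_B M)^{co H}`, `m ↦ 1_A ⊗ μ⁻¹(m)`,
for a left `B`-Hom-module `M`. -/
def UnitBijectiveL {Hb : MonoidalHomBialgebra k H} (Ac : HomComoduleAlgebra Hb A)
    (Bset : Set A) {M : Type} [AddCommGroup M] [Module k M]
    (S : HomLeftModuleOn Ac Bset M) : Prop :=
  ∀ (ρbar : ((A ⊗[k] M) ⧸ relSubL Ac.mul Ac.aut Bset S.act S.aut) →ₗ[k]
      ((A ⊗[k] M) ⧸ relSubL Ac.mul Ac.aut Bset S.act S.aut) ⊗[k] H)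
    (θ : ((A ⊗[k] M) ⧸ relSubL Ac.mul Ac.aut Bset S.act S.aut) →ₗ[k]
      ((A ⊗[k] M) ⧸ relSubL Ac.mul Ac.aut Bset S.act S.aut)),
    ρbar ∘ₗ (relSubL Ac.mul Ac.aut Bset S.act S.aut).mkQ =
      (TensorProduct.map (relSubL Ac.mul Ac.aut Bset S.act S.aut).mkQ LinearMap.id) ∘ₗ
        quotCoactPreL Ac S.aut →
    θ ∘ₗ (relSubL Ac.mul Ac.aut Bset S.act S.aut).mkQ =
      (relSubL Ac.mul Ac.aut Bset S.act S.aut).mkQ ∘ₗ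
        TensorProduct.map Ac.aut.symm.toLinearMap S.aut.symm.toLinearMap →
    ((∀ m : M, ρbar ((relSubL Ac.mul Ac.aut Bset S.act S.aut).mkQ (Ac.one ⊗ₜ[k] S.aut.symm m)) =
        θ ((relSubL Ac.mul Ac.aut Bset S.act S.aut).mkQ (Ac.one ⊗ₜ[k] S.aut.symm m)) ⊗ₜ[k] Hb.one) ∧
      Function.Injective
        (fun m : M => (relSubL Ac.mul Ac.aut Bset S.act S.aut).mkQ (Ac.one ⊗ₜ[k] S.aut.symm m)) ∧
      ∀ x, ρbar x = θ x ⊗ₜ[k] Hb.one →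
        ∃ m : M, (relSubL Ac.mul Ac.aut Bset S.act S.aut).mkQ (Ac.one ⊗ₜ[k] S.aut.symm m) = x)

/-- The relations of `A ⊗_B N^{co H}` for a left-right (H,A)-Hom-Hopf module `N`. -/
def relCoinvL {Hb : MonoidalHomBialgebra k H} (Ac : HomComoduleAlgebra Hb A)
    (Bset : Set A) {N : Type} [AddCommGroup N] [Module k N]
    (P : LRHomHopfModule Ac N) :
    Submodule k (A ⊗[k] (coinvSubmoduleOf Hb.one P.coact P.aut : Submodule k N)) :=
  Submodule.span k
    {x | ∃ (n n' n'' : coinvSubmoduleOf Hb.one P.coact P.aut) (a b : A), b ∈ Bset ∧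
      (n' : N) = P.act b n ∧ (n'' : N) = P.aut n ∧
      x = Ac.aut a ⊗ₜ[k] n' - Ac.mul a b ⊗ₜ[k] n''}

/-- The counit at the level of `A ⊗ N^{co H}`: `a ⊗ n ↦ a · n`. -/
def counitPreL {Hb : MonoidalHomBialgebra k H} (Ac : HomComoduleAlgebra Hb A)
    {N : Type} [AddCommGroup N] [Module k N] (P : LRHomHopfModule Ac N) :
    (A ⊗[k] (coinvSubmoduleOf Hb.one P.coact P.aut : Submodule k N)) →ₗ[k] N :=
  TensorProduct.lift (P.act.compl₂ (coinvSubmoduleOf Hb.one P.coact P.aut).subtype)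

/-- Bijectivity of the counit `ε'_N : A ⊗_B N^{co H} → N`. -/
def CounitBijectiveL {Hb : MonoidalHomBialgebra k H} (Ac : HomComoduleAlgebra Hb A)
    (Bset : Set A) {N : Type} [AddCommGroup N] [Module k N]
    (P : LRHomHopfModule Ac N) : Prop :=
  Function.Surjective (counitPreL Ac P) ∧ LinearMap.ker (counitPreL Ac P) = relCoinvL Ac Bset P

/-- A morphism of right `B`-Hom-modules. -/
def IsHomModuleOnHomR {Hb : MonoidalHomBialgebra k H} (Ac : HomComoduleAlgebra Hb A)
    (Bset : Set A) {M₁ M₂ : Type} [AddCommGroup M₁] [Module k M₁] [AddCommGroup M₂] [Module k M₂]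
    (S₁ : HomModuleOn Ac Bset M₁) (S₂ : HomModuleOn Ac Bset M₂) (f : M₁ →ₗ[k] M₂) : Prop :=
  (∀ m, ∀ b ∈ Bset, f (S₁.act m b) = S₂.act (f m) b) ∧ ∀ m, f (S₁.aut m) = S₂.aut (f m)

/-- A morphism of left `B`-Hom-modules. -/
def IsHomModuleOnHomL {Hb : MonoidalHomBialgebra k H} (Ac : HomComoduleAlgebra Hb A)
    (Bset : Set A) {M₁ M₂ : Type} [AddCommGroup M₁] [Module k M₁] [AddCommGroup M₂] [Module k M₂]
    (S₁ : HomLeftModuleOn Ac Bset M₁) (S₂ : HomLeftModuleOn Ac Bset M₂) (f : M₁ →ₗ[k] M₂) : Prop :=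
  (∀ m, ∀ b ∈ Bset, f (S₁.act b m) = S₂.act b (f m)) ∧ ∀ m, f (S₁.aut m) = S₂.aut (f m)

/-- `A` is faithfully flat as a left `B`-Hom-module: the induced functor `− ⊗_B A`
on right `B`-Hom-modules preserves and reflects exactness. -/
def FaithfullyFlatLeftOf {Hb : MonoidalHomBialgebra k H} (Ac : HomComoduleAlgebra Hb A)
    (Bset : Set A) : Prop :=
  ∀ (M₁ M₂ M₃ : Type) [AddCommGroup M₁] [Module k M₁] [AddCommGroup M₂] [Module k M₂]
    [AddCommGroup M₃] [Module k M₃]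
    (S₁ : HomModuleOn Ac Bset M₁) (S₂ : HomModuleOn Ac Bset M₂) (S₃ : HomModuleOn Ac Bset M₃)
    (f : M₁ →ₗ[k] M₂) (g : M₂ →ₗ[k] M₃),
    IsHomModuleOnHomR Ac Bset S₁ S₂ f → IsHomModuleOnHomR Ac Bset S₂ S₃ g →
    ∀ (fbar : ((M₁ ⊗[k] A) ⧸ relSubR Ac.mul Ac.aut Bset S₁.act S₁.aut) →ₗ[k]
        ((M₂ ⊗[k] A) ⧸ relSubR Ac.mul Ac.aut Bset S₂.act S₂.aut))
      (gbar : ((M₂ ⊗[k] A) ⧸ relSubR Ac.mul Ac.aut Bset S₂.act S₂.aut) →ₗ[k]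
        ((M₃ ⊗[k] A) ⧸ relSubR Ac.mul Ac.aut Bset S₃.act S₃.aut)),
      fbar ∘ₗ (relSubR Ac.mul Ac.aut Bset S₁.act S₁.aut).mkQ =
        (relSubR Ac.mul Ac.aut Bset S₂.act S₂.aut).mkQ ∘ₗ TensorProduct.map f LinearMap.id →
      gbar ∘ₗ (relSubR Ac.mul Ac.aut Bset S₂.act S₂.aut).mkQ =
        (relSubR Ac.mul Ac.aut Bset S₃.act S₃.aut).mkQ ∘ₗ TensorProduct.map g LinearMap.id →
      (LinearMap.range f = LinearMap.ker g ↔ LinearMap.range fbar = LinearMap.ker gbar)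

/-- `A` is faithfully flat as a right `B`-Hom-module: the induced functor `A ⊗_B −`
on left `B`-Hom-modules preserves and reflects exactness. -/
def FaithfullyFlatRightOf {Hb : MonoidalHomBialgebra k H} (Ac : HomComoduleAlgebra Hb A)
    (Bset : Set A) : Prop :=
  ∀ (M₁ M₂ M₃ : Type) [AddCommGroup M₁] [Module k M₁] [AddCommGroup M₂] [Module k M₂]
    [AddCommGroup M₃] [Module k M₃]
    (S₁ : HomLeftModuleOn Ac Bset M₁) (S₂ : HomLeftModuleOn Ac Bset M₂)
    (S₃ : HomLeftModuleOn Ac Bset M₃)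
    (f : M₁ →ₗ[k] M₂) (g : M₂ →ₗ[k] M₃),
    IsHomModuleOnHomL Ac Bset S₁ S₂ f → IsHomModuleOnHomL Ac Bset S₂ S₃ g →
    ∀ (fbar : ((A ⊗[k] M₁) ⧸ relSubL Ac.mul Ac.aut Bset S₁.act S₁.aut) →ₗ[k]
        ((A ⊗[k] M₂) ⧸ relSubL Ac.mul Ac.aut Bset S₂.act S₂.aut))
      (gbar : ((A ⊗[k] M₂) ⧸ relSubL Ac.mul Ac.aut Bset S₂.act S₂.aut) →ₗ[k]
        ((A ⊗[k] M₃) ⧸ relSubL Ac.mul Ac.aut Bset S₃.act S₃.aut)),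
      fbar ∘ₗ (relSubL Ac.mul Ac.aut Bset S₁.act S₁.aut).mkQ =
        (relSubL Ac.mul Ac.aut Bset S₂.act S₂.aut).mkQ ∘ₗ TensorProduct.map LinearMap.id f →
      gbar ∘ₗ (relSubL Ac.mul Ac.aut Bset S₂.act S₂.aut).mkQ =
        (relSubL Ac.mul Ac.aut Bset S₃.act S₃.aut).mkQ ∘ₗ TensorProduct.map LinearMap.id g →
      (LinearMap.range f = LinearMap.ker g ↔ LinearMap.range fbar = LinearMap.ker gbar)

/-- `A` is flat as a left `B`-Hom-module: `− ⊗_B A` preserves exactness. -/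
def FlatLeftOf {Hb : MonoidalHomBialgebra k H} (Ac : HomComoduleAlgebra Hb A)
    (Bset : Set A) : Prop :=
  ∀ (M₁ M₂ M₃ : Type) [AddCommGroup M₁] [Module k M₁] [AddCommGroup M₂] [Module k M₂]
    [AddCommGroup M₃] [Module k M₃]
    (S₁ : HomModuleOn Ac Bset M₁) (S₂ : HomModuleOn Ac Bset M₂) (S₃ : HomModuleOn Ac Bset M₃)
    (f : M₁ →ₗ[k] M₂) (g : M₂ →ₗ[k] M₃),
    IsHomModuleOnHomR Ac Bset S₁ S₂ f → IsHomModuleOnHomR Ac Bset S₂ S₃ g →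
    ∀ (fbar : ((M₁ ⊗[k] A) ⧸ relSubR Ac.mul Ac.aut Bset S₁.act S₁.aut) →ₗ[k]
        ((M₂ ⊗[k] A) ⧸ relSubR Ac.mul Ac.aut Bset S₂.act S₂.aut))
      (gbar : ((M₂ ⊗[k] A) ⧸ relSubR Ac.mul Ac.aut Bset S₂.act S₂.aut) →ₗ[k]
        ((M₃ ⊗[k] A) ⧸ relSubR Ac.mul Ac.aut Bset S₃.act S₃.aut)),
      fbar ∘ₗ (relSubR Ac.mul Ac.aut Bset S₁.act S₁.aut).mkQ =
        (relSubR Ac.mul Ac.aut Bset S₂.act S₂.aut).mkQ ∘ₗ TensorProduct.map f LinearMap.id →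
      gbar ∘ₗ (relSubR Ac.mul Ac.aut Bset S₂.act S₂.aut).mkQ =
        (relSubR Ac.mul Ac.aut Bset S₃.act S₃.aut).mkQ ∘ₗ TensorProduct.map g LinearMap.id →
      (LinearMap.range f = LinearMap.ker g → LinearMap.range fbar = LinearMap.ker gbar)

end

/-! In Sweedler notation, Hom-coassociativity and the antipode axioms give
`(1 ⊗ α⁻¹ x₁) Δ(S x₂) = S(α⁻¹ x) ⊗ 1`. Expanding `ρ (f (n ⊗ x))` by colinearity of `λ` and by the
compatibility of the action with the coactions produces, up to automorphisms, the factors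
`S(n₍₁₎)₁` inside `λ` and `n₍₀₎₍₁₎ S(n₍₁₎)₂` in `H`. The identity removes the second one, and what
remains is the coaction of `N ⊗ (A ⊗ H)`. The splitting is the opposite cancellation
`S(n₍₁₎₁) n₍₁₎₂ = ε(n₍₁₎) 1` under `λ (1 ⊗ 1) = 1`. A colinear map commutes with the
structure automorphisms because these are recovered from the coactions through the counit. -/

noncomputable section

variable {k : Type} [Field k] {H : Type} [AddCommGroup H] [Module k H]

theorem lift_map₂ {R M N P Q S T : Type*} [CommSemiring R]
    [AddCommMonoid M] [AddCommMonoid N] [AddCommMonoid P]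
    [AddCommMonoid Q] [AddCommMonoid S] [AddCommMonoid T]
    [Module R M] [Module R N] [Module R P] [Module R Q] [Module R S] [Module R T]
    (f : M →ₗ[R] P →ₗ[R] S) (g : N →ₗ[R] Q →ₗ[R] T) :
    lift (map₂ f g) = map (lift f) (lift g) ∘ₗ
      (tensorTensorTensorComm R M N P Q).toLinearMap :=
  ext_fourfold' fun _ _ _ _ => rfl

namespace HomComodule

variable {Hb : MonoidalHomBialgebra k H} {M : Type} [AddCommGroup M] [Module k M]
  (C : HomComodule Hb M)

theorem coact_aut_symm_apply (m : M) :
    C.coact (C.aut.symm m) =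
      map C.aut.symm.toLinearMap Hb.aut.symm.toLinearMap (C.coact m) := by
  have h := LinearMap.congr_fun C.coact_aut (C.aut.symm m)
  simp only [LinearMap.comp_apply, LinearEquiv.coe_coe, LinearEquiv.apply_symm_apply] at h
  rw [h, map_map, LinearEquiv.symm_comp, LinearEquiv.symm_comp, map_id, LinearMap.id_apply]

/-- Hom-coassociativity in the shape in which it is used in Sweedler calculations:
`F (m₍₀₎₍₀₎ ⊗ m₍₀₎₍₁₎ ⊗ α⁻¹ m₍₁₎) = F (μ⁻¹ m₍₀₎ ⊗ m₍₁₎₁ ⊗ m₍₁₎₂)`. -/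
theorem apply_coact_eq_of_coassoc {Z : Type*} [AddCommGroup Z] [Module k Z]
    (F : (M ⊗[k] H) ⊗[k] H →ₗ[k] Z) {G : M ⊗[k] H →ₗ[k] Z}
    (hG : ∀ m h, G (m ⊗ₜ h) = F (C.coact m ⊗ₜ Hb.aut.symm h)) (m : M) :
    G (C.coact m) = (F ∘ₗ (TensorProduct.assoc k M H H).symm.toLinearMap ∘ₗ
      map C.aut.symm.toLinearMap Hb.comul) (C.coact m) := by
  have hGF : G = F ∘ₗ map C.coact Hb.aut.symm.toLinearMap := ext' hG
  have hcoassoc := LinearMap.congr_fun C.coassoc m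
  simp only [LinearMap.comp_apply, LinearEquiv.coe_coe] at hcoassoc
  simp only [hGF, LinearMap.comp_apply, LinearEquiv.coe_coe, hcoassoc,
    LinearEquiv.symm_apply_apply]

theorem apply_coact_eq_of_counit {Z : Type*} [AddCommGroup Z] [Module k Z]
    {G : M ⊗[k] H →ₗ[k] Z} {g : M →ₗ[k] Z}
    (hG : ∀ m h, G (m ⊗ₜ h) = Hb.counit h • g m) (m : M) :
    G (C.coact m) = g (C.aut.symm m) := by
  have hGg : G = g ∘ₗ (TensorProduct.rid k M).toLinearMap ∘ₗ map LinearMap.id Hb.counit :=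
    ext' fun m h => by simp [hG]
  rw [hGg, ← LinearEquiv.coe_coe C.aut.symm, ← C.counit]
  rfl

theorem comp_aut_of_colinear {X : Type*} [AddCommGroup X] [Module k X] {f : X →ₗ[k] M}
    (τ : X ≃ₗ[k] X) {ρ : X →ₗ[k] X ⊗[k] H}
    (hρ : (TensorProduct.rid k X).toLinearMap ∘ₗ map LinearMap.id Hb.counit ∘ₗ ρ =
      τ.symm.toLinearMap)
    (hf : C.coact ∘ₗ f = map f LinearMap.id ∘ₗ ρ) :
    f ∘ₗ τ.toLinearMap = C.aut.toLinearMap ∘ₗ f := by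
  have counit_map : ((TensorProduct.rid k M).toLinearMap ∘ₗ map LinearMap.id Hb.counit) ∘ₗ
      map f LinearMap.id =
        f ∘ₗ (TensorProduct.rid k X).toLinearMap ∘ₗ map LinearMap.id Hb.counit :=
    ext' fun x h => by simp
  have symm_comm : C.aut.symm.toLinearMap ∘ₗ f = f ∘ₗ τ.symm.toLinearMap := by
    rw [← C.counit, ← hρ, LinearMap.comp_assoc, LinearMap.comp_assoc, hf]
    exact congrArg (· ∘ₗ ρ) counit_map
  ext x
  simpa [LinearEquiv.symm_apply_eq] using LinearMap.congr_fun symm_comm (τ x)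

end HomComodule

namespace MonoidalHomBialgebra

variable (Hb : MonoidalHomBialgebra k H)

theorem aut_symm_one : Hb.aut.symm Hb.one = Hb.one := by
  rw [LinearEquiv.symm_apply_eq, Hb.aut_one]

theorem aut_symm_mul (x y : H) :
    Hb.aut.symm (Hb.mul x y) = Hb.mul (Hb.aut.symm x) (Hb.aut.symm y) := by
  simp [LinearEquiv.symm_apply_eq, Hb.aut_mul]

/-- `H` as a Hom-comodule over itself, by comultiplication. -/
def regularComodule : HomComodule Hb H where
  coact := Hb.comul
  aut := Hb.aut
  coassoc := Hb.coassoc.symm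
  counit := Hb.counit_right
  coact_aut := Hb.comul_aut

theorem comul_aut_apply (x : H) :
    Hb.comul (Hb.aut x) = map Hb.aut.toLinearMap Hb.aut.toLinearMap (Hb.comul x) :=
  LinearMap.congr_fun Hb.comul_aut x

theorem counit_aut_apply (x : H) : Hb.counit (Hb.aut x) = Hb.counit x :=
  LinearMap.congr_fun Hb.counit_aut x

theorem apply_comul_eq_of_counit_left {Z : Type*} [AddCommGroup Z] [Module k Z]
    {G : H ⊗[k] H →ₗ[k] Z} {g : H →ₗ[k] Z}
    (hG : ∀ x y, G (x ⊗ₜ y) = Hb.counit x • g y) (x : H) :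
    G (Hb.comul x) = g (Hb.aut.symm x) := by
  have hGg : G = g ∘ₗ (TensorProduct.lid k H).toLinearMap ∘ₗ map Hb.counit LinearMap.id :=
    ext' fun x y => by simp [hG]
  rw [hGg, ← LinearEquiv.coe_coe Hb.aut.symm, ← Hb.counit_left]
  rfl

/-- The componentwise multiplication of `H ⊗ H`, for which the comultiplication is
multiplicative. -/
def tensorMul : H ⊗[k] H →ₗ[k] H ⊗[k] H →ₗ[k] H ⊗[k] H :=
  map₂ Hb.mul Hb.mul

@[simp]
theorem tensorMul_tmul (x y x' y' : H) :
    Hb.tensorMul (x ⊗ₜ y) (x' ⊗ₜ y') = Hb.mul x x' ⊗ₜ Hb.mul y y' :=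
  rfl

theorem comul_mul_apply (x y : H) :
    Hb.comul (Hb.mul x y) = Hb.tensorMul (Hb.comul x) (Hb.comul y) := by
  have h := LinearMap.congr_fun Hb.comul_mul (x ⊗ₜ y)
  rwa [← LinearMap.comp_assoc, ← lift_map₂] at h

theorem tensorMul_hom_assoc (x y z : H ⊗[k] H) :
    Hb.tensorMul (map Hb.aut.toLinearMap Hb.aut.toLinearMap x) (Hb.tensorMul y z) =
      Hb.tensorMul (Hb.tensorMul x y) (map Hb.aut.toLinearMap Hb.aut.toLinearMap z) := by
  induction x with
  | zero => simp
  | add x₁ x₂ h₁ h₂ => simp only [map_add, h₁, h₂, LinearMap.add_apply]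
  | tmul x₁ x₂ =>
    induction y with
    | zero => simp
    | add y₁ y₂ h₁ h₂ => simp only [map_add, h₁, h₂, LinearMap.add_apply]
    | tmul y₁ y₂ =>
      induction z with
      | zero => simp
      | add z₁ z₂ h₁ h₂ => simp only [map_add, h₁, h₂]
      | tmul z₁ z₂ => simp [Hb.hom_assoc]

/-- For `x : H`, the endomorphism `a ⊗ h ↦ a ⊗ x · α⁻¹ h` of `A ⊗ H`. -/
def lTensorMul (A : Type*) [AddCommGroup A] [Module k A] : H →ₗ[k] A ⊗[k] H →ₗ[k] A ⊗[k] H :=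
  LinearMap.lTensorHom A ∘ₗ Hb.mul.compl₂ Hb.aut.symm.toLinearMap

@[simp]
theorem lTensorMul_tmul {A : Type*} [AddCommGroup A] [Module k A] (x : H) (a : A) (h : H) :
    Hb.lTensorMul A x (a ⊗ₜ h) = a ⊗ₜ Hb.mul x (Hb.aut.symm h) :=
  rfl

end MonoidalHomBialgebra

namespace MonoidalHomHopf

variable (Hh : MonoidalHomHopf k H)

theorem antipode_aut_apply (x : H) : Hh.antipode (Hh.aut x) = Hh.aut (Hh.antipode x) :=
  LinearMap.congr_fun Hh.antipode_aut x

theorem antipode_aut_symm_apply (x : H) :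
    Hh.antipode (Hh.aut.symm x) = Hh.aut.symm (Hh.antipode x) := by
  rw [LinearEquiv.eq_symm_apply, ← antipode_aut_apply, LinearEquiv.apply_symm_apply]

theorem mul_antipode_left_comul (x : H) :
    lift Hh.mul (map Hh.antipode LinearMap.id (Hh.comul x)) = Hh.counit x • Hh.one :=
  LinearMap.congr_fun Hh.antipode_mul_left x

theorem mul_antipode_right_comul (x : H) :
    lift Hh.mul (map LinearMap.id Hh.antipode (Hh.comul x)) = Hh.counit x • Hh.one :=
  LinearMap.congr_fun Hh.antipode_mul_right x

/-- `(S(α⁻¹ x₁) ⊗ 1) Δ(x₂) = 1 ⊗ α⁻¹ x` -/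
theorem antipode_tmul_one_tensorMul_comul (x : H) :
    (lift Hh.tensorMul ∘ₗ map ((TensorProduct.mk k H H).flip Hh.one ∘ₗ Hh.antipode ∘ₗ
      Hh.aut.symm.toLinearMap) Hh.comul) (Hh.comul x) = Hh.one ⊗ₜ Hh.aut.symm x := by
  let F : (H ⊗[k] H) ⊗[k] H →ₗ[k] H ⊗[k] H :=
    map (lift Hh.mul ∘ₗ map Hh.antipode LinearMap.id) Hh.aut.toLinearMap
  have expand (y : H) (t : H ⊗[k] H) :
      Hh.tensorMul (Hh.antipode (Hh.aut.symm y) ⊗ₜ Hh.one) t =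
        F ((TensorProduct.assoc k H H H).symm (Hh.aut.symm y ⊗ₜ t)) := by
    induction t with
    | zero => simp
    | add t₁ t₂ h₁ h₂ => simp only [tmul_add, map_add, h₁, h₂]
    | tmul u v => simp [F, Hh.oneMul]
  calc (lift Hh.tensorMul ∘ₗ map ((TensorProduct.mk k H H).flip Hh.one ∘ₗ Hh.antipode ∘ₗ
        Hh.aut.symm.toLinearMap) Hh.comul) (Hh.comul x)
      = (F ∘ₗ (TensorProduct.assoc k H H H).symm.toLinearMap ∘ₗ
          map Hh.aut.symm.toLinearMap Hh.comul) (Hh.comul x) :=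
        LinearMap.congr_fun (ext' fun y z => expand y (Hh.comul z)) _
    _ = (F ∘ₗ map Hh.comul Hh.aut.symm.toLinearMap) (Hh.comul x) :=
        (Hh.regularComodule.apply_coact_eq_of_coassoc F (fun _ _ => rfl) x).symm
    _ = TensorProduct.mk k H H Hh.one (Hh.aut.symm x) :=
        Hh.apply_comul_eq_of_counit_left
          (fun y z => by simp [F, mul_antipode_left_comul, smul_tmul']) x

/-- `(1 ⊗ α⁻¹ x₁) Δ(S x₂) = S(α⁻¹ x) ⊗ 1` -/
theorem one_tmul_tensorMul_comul_antipode (x : H) :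
    (lift Hh.tensorMul ∘ₗ map (TensorProduct.mk k H H Hh.one ∘ₗ Hh.aut.symm.toLinearMap)
      (Hh.comul ∘ₗ Hh.antipode)) (Hh.comul x) = Hh.antipode (Hh.aut.symm x) ⊗ₜ Hh.one := by
  let F : (H ⊗[k] H) ⊗[k] H →ₗ[k] H ⊗[k] H :=
    lift Hh.tensorMul ∘ₗ map
      (lift Hh.tensorMul ∘ₗ map ((TensorProduct.mk k H H).flip Hh.one ∘ₗ Hh.antipode ∘ₗ
        Hh.aut.symm.toLinearMap) Hh.comul)
      (map Hh.aut.toLinearMap Hh.aut.toLinearMap ∘ₗ Hh.comul ∘ₗ Hh.antipode)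
  have reassociate (y : H) (t : H ⊗[k] H) :
      F ((TensorProduct.assoc k H H H).symm (Hh.aut.symm y ⊗ₜ t)) =
        Hh.tensorMul (Hh.antipode (Hh.aut.symm y) ⊗ₜ Hh.one)
          (Hh.comul (lift Hh.mul (map LinearMap.id Hh.antipode t))) := by
    induction t with
    | zero => simp
    | add t₁ t₂ h₁ h₂ => simp only [tmul_add, map_add, h₁, h₂]
    | tmul u v =>
      simp [F, Hh.comul_mul_apply, ← Hh.tensorMul_hom_assoc, Hh.aut_one, ← antipode_aut_apply]
  refine (Hh.regularComodule.apply_coact_eq_of_coassoc F (fun y z => ?_) x).trans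
    (Hh.regularComodule.apply_coact_eq_of_counit
      (g := (TensorProduct.mk k H H).flip Hh.one ∘ₗ Hh.antipode) (fun y z => ?_) x)
  · have cancel := Hh.antipode_tmul_one_tensorMul_comul y
    simp only [LinearMap.comp_apply] at cancel
    change _ = F (Hh.comul y ⊗ₜ Hh.aut.symm z)
    simp only [F, LinearMap.comp_apply, map_tmul, cancel, lift.tmul, LinearEquiv.coe_coe,
      ← Hh.comul_aut_apply, ← antipode_aut_apply, LinearEquiv.apply_symm_apply,
      TensorProduct.mk_apply]
  · refine (reassociate y (Hh.comul z)).trans ?_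
    simp [mul_antipode_right_comul, Hh.comul_one, Hh.mulOne, antipode_aut_symm_apply, Hh.aut_one]

end MonoidalHomHopf

variable {A : Type} [AddCommGroup A] [Module k A]

namespace HomComoduleAlgebra

variable {Hb : MonoidalHomBialgebra k H} (Ac : HomComoduleAlgebra Hb A)

/-- The coaction `a ⊗ h ↦ (β⁻¹ a ⊗ h₁) ⊗ α h₂` of `H` on `A ⊗ H`. -/
def tensorCoact : A ⊗[k] H →ₗ[k] (A ⊗[k] H) ⊗[k] H :=
  map LinearMap.id Hb.aut.toLinearMap ∘ₗ (TensorProduct.assoc k A H H).symm.toLinearMap ∘ₗ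
    map Ac.aut.symm.toLinearMap Hb.comul

theorem counit_tensorCoact :
    (TensorProduct.rid k (A ⊗[k] H)).toLinearMap ∘ₗ map LinearMap.id Hb.counit ∘ₗ
      Ac.tensorCoact = (TensorProduct.congr Ac.aut Hb.aut).symm.toLinearMap :=
  ext' fun a h => Hb.regularComodule.apply_coact_eq_of_counit
    (G := (TensorProduct.rid k (A ⊗[k] H)).toLinearMap ∘ₗ map LinearMap.id Hb.counit ∘ₗ
      map LinearMap.id Hb.aut.toLinearMap ∘ₗ (TensorProduct.assoc k A H H).symm.toLinearMap ∘ₗ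
        TensorProduct.mk k A _ (Ac.aut.symm a))
    (g := TensorProduct.mk k A H (Ac.aut.symm a))
    (fun p q => by simp [Hb.counit_aut_apply]) h

theorem tensorCoact_lTensorMul (y : H) (x : A ⊗[k] H) :
    Ac.tensorCoact (Hb.lTensorMul A y x) =
      map₂ (Hb.lTensorMul A) (Hb.mul.compl₁₂ Hb.aut.toLinearMap Hb.aut.symm.toLinearMap)
        (Hb.comul y) (Ac.tensorCoact x) := by
  induction x with
  | zero => simp
  | add x₁ x₂ h₁ h₂ => simp only [map_add, h₁, h₂]
  | tmul a h =>
    have comul_symm : Hb.comul (Hb.aut.symm h) =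
        map Hb.aut.symm.toLinearMap Hb.aut.symm.toLinearMap (Hb.comul h) :=
      Hb.regularComodule.coact_aut_symm_apply h
    simp only [tensorCoact, LinearMap.comp_apply, MonoidalHomBialgebra.lTensorMul_tmul, map_tmul,
      Hb.comul_mul_apply, comul_symm]
    generalize Hb.comul h = t
    generalize Hb.comul y = u
    induction t with
    | zero => simp
    | add t₁ t₂ h₁ h₂ => simp only [map_add, tmul_add, h₁, h₂]
    | tmul p q =>
      induction u with
      | zero => simp
      | add u₁ u₂ h₁ h₂ => simp only [map_add, tmul_add, LinearMap.add_apply, h₁, h₂]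
      | tmul r s => simp [Hb.aut_mul]

end HomComoduleAlgebra

namespace HomHopfModule

variable {N : Type} [AddCommGroup N] [Module k N]

section Bialgebra

variable {Hb : MonoidalHomBialgebra k H} {Ac : HomComoduleAlgebra Hb A} (P : HomHopfModule Ac N)

/-- The Hom-comodule underlying a Hom-Hopf module. -/
def toHomComodule : HomComodule Hb N where
  coact := P.coact
  aut := P.aut
  coassoc := P.coassoc
  counit := P.counit
  coact_aut := P.coact_aut

/-- The componentwise action `(n ⊗ h) · (a ⊗ h') = n · a ⊗ h h'`, for which the coaction of a
Hom-Hopf module is compatible with the action. -/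
def tensorAct : N ⊗[k] H →ₗ[k] A ⊗[k] H →ₗ[k] N ⊗[k] H :=
  map₂ P.act Hb.mul

@[simp]
theorem tensorAct_tmul (n : N) (h : H) (a : A) (h' : H) :
    P.tensorAct (n ⊗ₜ h) (a ⊗ₜ h') = P.act n a ⊗ₜ Hb.mul h h' :=
  rfl

theorem coact_act (n : N) (a : A) :
    P.coact (P.act n a) = P.tensorAct (P.coact n) (Ac.coact a) := by
  have h := LinearMap.congr_fun P.compat (n ⊗ₜ a)
  rwa [← LinearMap.comp_assoc, ← lift_map₂] at h

/-- The coaction `n ⊗ (a ⊗ h) ↦ (ν⁻¹ n ⊗ (β⁻¹ a ⊗ h₁)) ⊗ α² h₂` of `H` on `N ⊗ (A ⊗ H)`. -/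
def freeCoact : N ⊗[k] (A ⊗[k] H) →ₗ[k] (N ⊗[k] (A ⊗[k] H)) ⊗[k] H :=
  map LinearMap.id (Hb.aut.toLinearMap ∘ₗ Hb.aut.toLinearMap) ∘ₗ
    (TensorProduct.assoc k N (A ⊗[k] H) H).symm.toLinearMap ∘ₗ
      map P.aut.symm.toLinearMap ((TensorProduct.assoc k A H H).symm.toLinearMap ∘ₗ
        map Ac.aut.symm.toLinearMap Hb.comul)

theorem freeCoact_tmul (n : N) (x : A ⊗[k] H) :
    P.freeCoact (n ⊗ₜ x) = map (TensorProduct.mk k N (A ⊗[k] H) (P.aut.symm n))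
      Hb.aut.toLinearMap (Ac.tensorCoact x) := by
  simp only [freeCoact, HomComoduleAlgebra.tensorCoact, LinearMap.comp_apply, map_tmul]
  generalize (TensorProduct.assoc k A H H).symm.toLinearMap _ = s
  induction s with
  | zero => simp
  | add s₁ s₂ h₁ h₂ => simp only [tmul_add, map_add, h₁, h₂]
  | tmul ξ z => simp

theorem counit_freeCoact :
    (TensorProduct.rid k (N ⊗[k] (A ⊗[k] H))).toLinearMap ∘ₗ map LinearMap.id Hb.counit ∘ₗ
      P.freeCoact =
        (TensorProduct.congr P.aut (TensorProduct.congr Ac.aut Hb.aut)).symm.toLinearMap := by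
  refine ext' fun n x => ?_
  have counit_map : ((TensorProduct.rid k _).toLinearMap ∘ₗ map LinearMap.id Hb.counit) ∘ₗ
      map (TensorProduct.mk k N (A ⊗[k] H) (P.aut.symm n)) Hb.aut.toLinearMap =
        TensorProduct.mk k N _ (P.aut.symm n) ∘ₗ (TensorProduct.rid k _).toLinearMap ∘ₗ
          map LinearMap.id Hb.counit :=
    ext' fun y h => by simp [Hb.counit_aut_apply]
  rw [LinearMap.comp_apply, LinearMap.comp_apply, freeCoact_tmul]
  exact (LinearMap.congr_fun counit_map _).trans
    (congrArg (P.aut.symm n ⊗ₜ[k] ·) (LinearMap.congr_fun Ac.counit_tensorCoact x))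

end Bialgebra

section Hopf

variable {Hh : MonoidalHomHopf k H} {Ac : HomComoduleAlgebra Hh.toMonoidalHomBialgebra A}
  (P : HomHopfModule Ac N)

/-- The map `f : N ⊗ (A ⊗ H) → N`, `n ⊗ (a ⊗ h) ↦ ν n₍₀₎ · λ (a ⊗ S(α⁻¹ n₍₁₎) · α⁻¹ h)`,
attached to `λ : A ⊗ H → A`. -/
def twistedAct (lam : A ⊗[k] H →ₗ[k] A) : N ⊗[k] (A ⊗[k] H) →ₗ[k] N :=
  lift P.act ∘ₗ map P.aut.toLinearMap lam ∘ₗ (TensorProduct.assoc k N A H).toLinearMap ∘ₗ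
    map LinearMap.id (lift Hh.mul ∘ₗ
      map (Hh.antipode ∘ₗ Hh.aut.symm.toLinearMap) Hh.aut.symm.toLinearMap) ∘ₗ
    (tensorTensorTensorComm k N H A H).toLinearMap ∘ₗ map P.coact LinearMap.id

theorem twistedAct_tmul (lam : A ⊗[k] H →ₗ[k] A) (n : N) (x : A ⊗[k] H) :
    P.twistedAct lam (n ⊗ₜ x) = lift P.act (map P.aut.toLinearMap
      (lam ∘ₗ (Hh.lTensorMul A).flip x ∘ₗ Hh.antipode ∘ₗ Hh.aut.symm.toLinearMap)
        (P.coact n)) := by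
  simp only [twistedAct, LinearMap.comp_apply, map_tmul, LinearMap.id_apply]
  generalize P.coact n = t
  induction t with
  | zero => simp
  | add t₁ t₂ h₁ h₂ => simp only [add_tmul, map_add, h₁, h₂]
  | tmul m h =>
    induction x with
    | zero => simp
    | add x₁ x₂ h₁ h₂ => simp_all [tmul_add]
    | tmul a h' => simp

/-- The Hom version of `m₍₀₎₍₀₎ · g(S(m₍₁₎)₁) ⊗ m₍₀₎₍₁₎ S(m₍₁₎)₂ z = m₍₀₎ · g(S(m₍₁₎)) ⊗ z`. -/
theorem tensorAct_coact_comul_antipode (g : H →ₗ[k] A) (z : H) (n : N) :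
    (lift P.tensorAct ∘ₗ map (map P.aut.toLinearMap Hh.aut.toLinearMap ∘ₗ P.coact)
      (map g (Hh.mul.flip z ∘ₗ Hh.aut.toLinearMap) ∘ₗ Hh.comul ∘ₗ Hh.antipode ∘ₗ
        Hh.aut.symm.toLinearMap)) (P.coact n) =
      lift P.act (map LinearMap.id (g ∘ₗ Hh.antipode ∘ₗ Hh.aut.symm.toLinearMap ∘ₗ
        Hh.aut.symm.toLinearMap) (P.coact n)) ⊗ₜ Hh.aut (Hh.aut z) := by
  let F : (N ⊗[k] H) ⊗[k] H →ₗ[k] N ⊗[k] H :=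
    lift P.tensorAct ∘ₗ map (map P.aut.toLinearMap Hh.aut.toLinearMap)
      (map g (Hh.mul.flip z ∘ₗ Hh.aut.toLinearMap) ∘ₗ Hh.comul ∘ₗ Hh.antipode)
  let J (m : N) : H ⊗[k] H →ₗ[k] N ⊗[k] H :=
    map (P.act m ∘ₗ g ∘ₗ Hh.aut.symm.toLinearMap) (Hh.mul.flip (Hh.aut z) ∘ₗ Hh.aut.toLinearMap)
  have reassociate (m : N) (t : H ⊗[k] H) :
      F ((TensorProduct.assoc k N H H).symm (P.aut.symm m ⊗ₜ t)) =
        J m ((lift Hh.tensorMul ∘ₗ map (TensorProduct.mk k H H Hh.one ∘ₗ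
          Hh.aut.symm.toLinearMap) (Hh.comul ∘ₗ Hh.antipode)) t) := by
    induction t with
    | zero => simp
    | add t₁ t₂ h₁ h₂ => simp only [tmul_add, map_add, h₁, h₂]
    | tmul y y' =>
      simp only [F, LinearMap.comp_apply, LinearEquiv.coe_coe, assoc_symm_tmul, map_tmul,
        LinearEquiv.apply_symm_apply, lift.tmul, TensorProduct.mk_apply]
      generalize Hh.comul (Hh.antipode y') = u
      induction u with
      | zero => simp
      | add u₁ u₂ h₁ h₂ => simp only [map_add, h₁, h₂]
      | tmul u v => simp [J, Hh.hom_assoc, Hh.aut_mul, Hh.oneMul]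
  have cancel (m : N) (y : H) :
      F ((TensorProduct.assoc k N H H).symm (P.aut.symm m ⊗ₜ Hh.comul y)) =
        P.act m (g (Hh.antipode (Hh.aut.symm (Hh.aut.symm y)))) ⊗ₜ Hh.aut (Hh.aut z) := by
    rw [reassociate, Hh.one_tmul_tensorMul_comul_antipode]
    simp [J, Hh.aut_one, Hh.oneMul, Hh.antipode_aut_symm_apply]
  refine (P.toHomComodule.apply_coact_eq_of_coassoc F (fun _ _ => rfl) n).trans ?_
  change _ = ((TensorProduct.mk k N H).flip (Hh.aut (Hh.aut z)) ∘ₗ lift P.act ∘ₗ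
    map LinearMap.id _) (P.coact n)
  exact LinearMap.congr_fun (ext' fun m y => cancel m y) _

variable {lam : A ⊗[k] H →ₗ[k] A}

theorem coact_twistedAct_tmul
    (hlam : Ac.coact ∘ₗ lam = map lam LinearMap.id ∘ₗ Ac.tensorCoact) (n : N) (x : A ⊗[k] H) :
    P.coact (P.twistedAct lam (n ⊗ₜ x)) = lift P.tensorAct
      (map (map P.aut.toLinearMap Hh.aut.toLinearMap ∘ₗ P.coact)
        (map lam LinearMap.id ∘ₗ
          (map₂ (Hh.lTensorMul A)
            (Hh.mul.compl₁₂ Hh.aut.toLinearMap Hh.aut.symm.toLinearMap)).flip (Ac.tensorCoact x) ∘ₗ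
          Hh.comul ∘ₗ Hh.antipode ∘ₗ Hh.aut.symm.toLinearMap) (P.coact n)) := by
  have coact_aut (m : N) : P.coact (P.aut m) =
      map P.aut.toLinearMap Hh.aut.toLinearMap (P.coact m) :=
    LinearMap.congr_fun P.coact_aut m
  have coact_lam (x : A ⊗[k] H) :
      Ac.coact (lam x) = map lam LinearMap.id (Ac.tensorCoact x) :=
    LinearMap.congr_fun hlam x
  rw [twistedAct_tmul]
  generalize P.coact n = t
  induction t with
  | zero => simp
  | add t₁ t₂ h₁ h₂ => simp only [map_add, h₁, h₂]
  | tmul m h =>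
    simp only [map_tmul, lift.tmul, LinearMap.comp_apply, LinearEquiv.coe_coe, coact_act, coact_aut,
      coact_lam, LinearMap.flip_apply, HomComoduleAlgebra.tensorCoact_lTensorMul]

theorem coact_comp_twistedAct
    (hlam : Ac.coact ∘ₗ lam = map lam LinearMap.id ∘ₗ Ac.tensorCoact) :
    P.coact ∘ₗ P.twistedAct lam = map (P.twistedAct lam) LinearMap.id ∘ₗ P.freeCoact := by
  refine ext' fun n x => ?_
  rw [LinearMap.comp_apply, LinearMap.comp_apply, freeCoact_tmul, P.coact_twistedAct_tmul hlam]
  generalize Ac.tensorCoact x = s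
  induction s with
  | zero => simp
  | add s₁ s₂ h₁ h₂ =>
    simp only [map_add, LinearMap.comp_add, LinearMap.add_comp, map_add_right,
      LinearMap.add_apply, h₁, h₂]
  | tmul ξ z =>
    have flip_tmul : map lam LinearMap.id ∘ₗ (map₂ (Hh.lTensorMul A)
        (Hh.mul.compl₁₂ Hh.aut.toLinearMap Hh.aut.symm.toLinearMap)).flip (ξ ⊗ₜ z) =
          map (lam ∘ₗ (Hh.lTensorMul A).flip ξ)
            (Hh.mul.flip (Hh.aut.symm z) ∘ₗ Hh.aut.toLinearMap) :=
      ext' fun _ _ => rfl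
    have coact_symm : P.coact (P.aut.symm n) =
        map P.aut.symm.toLinearMap Hh.aut.symm.toLinearMap (P.coact n) :=
      P.toHomComodule.coact_aut_symm_apply n
    rw [← LinearMap.comp_assoc, flip_tmul, ← LinearMap.comp_apply (lift _),
      tensorAct_coact_comul_antipode]
    simp only [map_tmul, TensorProduct.mk_apply, twistedAct_tmul, coact_symm, LinearMap.id_apply,
      map_map, LinearMap.comp_assoc, LinearEquiv.comp_symm, LinearEquiv.coe_coe,
      LinearEquiv.apply_symm_apply]

theorem twistedAct_splitting (hlam : lam (Ac.one ⊗ₜ Hh.one) = Ac.one) (n : N) :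
    P.twistedAct lam (map LinearMap.id (TensorProduct.mk k A H Ac.one ∘ₗ Hh.aut.symm.toLinearMap)
      (P.coact n)) = n := by
  let F : (N ⊗[k] H) ⊗[k] H →ₗ[k] N :=
    lift P.act ∘ₗ map P.aut.toLinearMap (lam ∘ₗ TensorProduct.mk k A H Ac.one ∘ₗ
      Hh.aut.symm.toLinearMap ∘ₗ lift Hh.mul ∘ₗ map Hh.antipode LinearMap.id) ∘ₗ
        (TensorProduct.assoc k N H H).toLinearMap
  have expand (m : N) (h : H) :
      P.twistedAct lam (m ⊗ₜ (Ac.one ⊗ₜ Hh.aut.symm h)) = F (P.coact m ⊗ₜ Hh.aut.symm h) := by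
    rw [twistedAct_tmul]
    generalize P.coact m = t
    induction t with
    | zero => simp
    | add t₁ t₂ h₁ h₂ => simp only [add_tmul, map_add, h₁, h₂]
    | tmul m' h' => simp [F, Hh.aut_symm_mul, Hh.antipode_aut_symm_apply]
  refine (P.toHomComodule.apply_coact_eq_of_coassoc F
    (G := P.twistedAct lam ∘ₗ map LinearMap.id (TensorProduct.mk k A H Ac.one ∘ₗ
      Hh.aut.symm.toLinearMap)) expand n).trans
    ((P.toHomComodule.apply_coact_eq_of_counit (g := P.aut.toLinearMap) (fun m h => ?_) n).trans
      (P.aut.apply_symm_apply n))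
  change F ((TensorProduct.assoc k N H H).symm (P.aut.symm m ⊗ₜ Hh.comul h)) = _
  simp [F, Hh.mul_antipode_left_comul, Hh.aut_symm_one, hlam, P.act_one]

end Hopf

end HomHopfModule

theorem statement13_general {N : Type} [AddCommGroup N] [Module k N] (Hh : MonoidalHomHopf k H)
    (Ac : HomComoduleAlgebra Hh.toMonoidalHomBialgebra A) (lamA : A ⊗[k] H →ₗ[k] A)
    (lamA_one : lamA (Ac.one ⊗ₜ Hh.one) = Ac.one)
    (coact_lamA : Ac.coact ∘ₗ lamA = map lamA LinearMap.id ∘ₗ Ac.tensorCoact)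
    (P : HomHopfModule Ac N) :
    (∀ n : N, P.twistedAct lamA (map LinearMap.id
      (TensorProduct.mk k A H Ac.one ∘ₗ Hh.aut.symm.toLinearMap) (P.coact n)) = n) ∧
    Function.Surjective (P.twistedAct lamA) ∧
    P.coact ∘ₗ P.twistedAct lamA = map (P.twistedAct lamA) LinearMap.id ∘ₗ P.freeCoact ∧
    P.twistedAct lamA ∘ₗ
        (TensorProduct.congr P.aut (TensorProduct.congr Ac.aut Hh.aut)).toLinearMap =
      P.aut.toLinearMap ∘ₗ P.twistedAct lamA :=
  have splitting := P.twistedAct_splitting lamA_one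
  have colinear := P.coact_comp_twistedAct coact_lamA
  ⟨splitting, fun n => ⟨_, splitting n⟩, colinear,
    P.toHomComodule.comp_aut_of_colinear _ P.counit_freeCoact colinear⟩

end

/-! STATEMENT 13: Given a colinear retraction `λ_A` of `ρ_A`, the map
`f(n⊗(a⊗h)) = ν(n₍₀₎)·λ_A(a ⊗ S(α⁻¹(n₍₁₎))α⁻¹(h))` is a surjective right
(H,α)-colinear map `N⊗(A⊗H) → N`. -/
theorem statement13
    (k : Type) [Field k] (H : Type) [AddCommGroup H] [Module k H]
    (Hh : MonoidalHomHopf k H)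
    (Sinv : H →ₗ[k] H)
    (hSinv₁ : Sinv ∘ₗ Hh.antipode = LinearMap.id)
    (hSinv₂ : Hh.antipode ∘ₗ Sinv = LinearMap.id)
    (A : Type) [AddCommGroup A] [Module k A]
    (Ac : HomComoduleAlgebra Hh.toMonoidalHomBialgebra A)
    -- λ_A is a right (H,α)-colinear retraction of ρ_A
    (lamA : A ⊗[k] H →ₗ[k] A)
    (hlam₁ : lamA ∘ₗ Ac.coact = LinearMap.id)
    (hlam₂ : lamA ∘ₗ (TensorProduct.map Ac.aut.toLinearMap Hh.aut.toLinearMap) =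
      Ac.aut.toLinearMap ∘ₗ lamA)
    (hlam₃ : Ac.coact ∘ₗ lamA =
      (TensorProduct.map lamA LinearMap.id) ∘ₗ
        (TensorProduct.map LinearMap.id Hh.aut.toLinearMap) ∘ₗ
          (TensorProduct.assoc k A H H).symm.toLinearMap ∘ₗ
            (TensorProduct.map Ac.aut.symm.toLinearMap Hh.comul))
    (N : Type) [AddCommGroup N] [Module k N]
    (P : HomHopfModule Ac N)
    (f : N ⊗[k] (A ⊗[k] H) →ₗ[k] N)
    -- f(n⊗(a⊗h)) = ν(n₍₀₎)·λ_A(a ⊗ S(α⁻¹(n₍₁₎))·α⁻¹(h))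
    (hfdef : f =
      (TensorProduct.lift P.act) ∘ₗ
        (TensorProduct.map P.aut.toLinearMap lamA) ∘ₗ
          (TensorProduct.assoc k N A H).toLinearMap ∘ₗ
            (TensorProduct.map LinearMap.id
              ((TensorProduct.lift Hh.mul) ∘ₗ
                (TensorProduct.map (Hh.antipode ∘ₗ Hh.aut.symm.toLinearMap)
                  Hh.aut.symm.toLinearMap))) ∘ₗ
              (TensorProduct.tensorTensorTensorComm k N H A H).toLinearMap ∘ₗ
                (TensorProduct.map P.coact LinearMap.id))
    -- the Hom-comodule structure on N⊗(A⊗H):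
    -- n⊗(a⊗h) ↦ (ν⁻¹(n)⊗(β⁻¹(a)⊗h₁)) ⊗ α²(h₂)
    (ρX : N ⊗[k] (A ⊗[k] H) →ₗ[k] (N ⊗[k] (A ⊗[k] H)) ⊗[k] H)
    (hρX : ρX =
      (TensorProduct.map LinearMap.id (Hh.aut.toLinearMap ∘ₗ Hh.aut.toLinearMap)) ∘ₗ
        (TensorProduct.assoc k N (A ⊗[k] H) H).symm.toLinearMap ∘ₗ
          (TensorProduct.map P.aut.symm.toLinearMap
            ((TensorProduct.assoc k A H H).symm.toLinearMap ∘ₗ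
              (TensorProduct.map Ac.aut.symm.toLinearMap Hh.comul)))) :
    -- f is split surjective: f(n₍₀₎ ⊗ (1_A ⊗ α⁻¹(n₍₁₎))) = n
    (∀ n : N,
        f ((TensorProduct.map LinearMap.id
            ((TensorProduct.mk k A H Ac.one) ∘ₗ Hh.aut.symm.toLinearMap)) (P.coact n)) = n) ∧
    Function.Surjective f ∧
    -- f is right (H,α)-colinear
    P.coact ∘ₗ f = (TensorProduct.map f LinearMap.id) ∘ₗ ρX ∧
    f ∘ₗ (TensorProduct.congr P.aut (TensorProduct.congr Ac.aut Hh.aut)).toLinearMap =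
      P.aut.toLinearMap ∘ₗ f := by
  subst hfdef hρX
  have lamA_one : lamA (Ac.one ⊗ₜ Hh.one) = Ac.one := by
    rw [← Ac.coact_one]
    exact LinearMap.congr_fun hlam₁ Ac.one
  exact statement13_general Hh Ac lamA lamA_one hlam₃ P
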